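/- arXiv:1207.5680 — 2 statements merged into one kernel-verified Lean document; each statement's English description precedes it below -/
import Mathlib

section
/- Let A be an n×n rate matrix, α > 0, C ≥ 0, and let f : {1,…,n} × ℝⁿ → ℝ be a driver that is balanced, Lipschitz with some constant c with respect to the seminorms ‖·‖_{M,i}, and satisfies |f(i,0)| ≤ C for all i. Let T ≥ 0 and let w : ℝ → ℝⁿ be differentiable on [0,T] with w(T) = 0 and, for all t ∈ [0,T] and all i, (d/dt) w(t) i = α·w(t) i − f(i, w(t)) − ∑_j A j i · w(t) j. Then |w(t) i| ≤ C/α for all t ∈ [0,T] and all i. Moreover, if T' ≥ T and w' : ℝ → ℝⁿ satisfies the same terminal-value problem on [0,T'] with w'(T') = 0, then |w(t) i − w'(t) i| ≤ (C/α)·e^{−α(T−t)} for all t ∈ [0,T] and all i. (These are the Markovian forms of the uniform bound and the Cauchy estimate for the finite-horizon discounted BSDEs Y^T.) -/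
/-!
The heart of the matter is a maximum principle for the generator `z ↦ f i z + ∑ j, A j i * z j`:
if `z - z'` attains its maximum at the state `i`, then the value at `z` is at most the value at
`z'` (`generator_le_of_max`). This is exactly where the balance condition enters. With
`x j = z j - z' j - (z i - z' i) ≤ 0`, `D = f i z - f i z'` and `S = ∑ j, A j i * x j ^ 2`,
balance says `D * x j > -S`; multiplying by `-A j i * x j ≥ 0` and summing over `j` gives
`D * S ≤ -S * ∑ j, A j i * x j`, and `S > 0` can be cancelled. If `S = 0`, the Lipschitz condition
forces `D = 0` and every `A j i * x j` vanishes.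

Hence, if `g` is the difference of two solutions, then `g' i ≥ α * g i` at each maximising state
`i`. By the same principle with `0` in place of one solution, and `|f i 0| ≤ C`, this also holds
for `g = w - C / α` and `g = -w - C / α`. In all these cases `max_i exp (-α t) * g t i` is
nondecreasing in `t`, so a terminal bound `K` propagates backwards as `K * exp (-α (T - t))`
(`backward_bound`). For `± w - C / α`, with `K = 0`, this is the uniform bound; for `± (w - w')`
on `[0, T]`, where `w T - w' T = -w' T` is at most `C / α` by the uniform bound on `[0, T']`, it
is the Cauchy estimate.
-/

open Matrix BigOperators

/-- An `n×n` real matrix is a rate matrix if its off-diagonal entries are nonnegative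
and every column sums to zero. -/
def IsRateMatrix {n : ℕ} (A : Matrix (Fin n) (Fin n) ℝ) : Prop :=
  (∀ i j, i ≠ j → 0 ≤ A i j) ∧ (∀ j, ∑ i, A i j = 0)

/-- `ψ^i = diag(A e_i) − A·diag(e_i) − diag(e_i)·Aᵀ`. -/
noncomputable def psi {n : ℕ} (A : Matrix (Fin n) (Fin n) ℝ) (i : Fin n) :
    Matrix (Fin n) (Fin n) ℝ :=
  Matrix.diagonal (A.mulVec (Pi.single i 1))
    - A * Matrix.diagonal (Pi.single i 1)
    - Matrix.diagonal (Pi.single i 1) * A.transpose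

/-- The squared seminorm `‖z‖²_{M,i} = zᵀ ψ^i z`. -/
noncomputable def semiSq {n : ℕ} (A : Matrix (Fin n) (Fin n) ℝ) (i : Fin n)
    (z : Fin n → ℝ) : ℝ :=
  z ⬝ᵥ (psi A i).mulVec z

/-- A driver `f` is balanced if for every state `i`, all `z, z'` with `‖z−z'‖_{M,i} ≠ 0` and
every `j ≠ i` with `A j i > 0`, `(f(i,z) − f(i,z'))·((z−z')·(e_j − e_i)) > −‖z−z'‖²_{M,i}`. -/
def BalancedDriver {n : ℕ} (A : Matrix (Fin n) (Fin n) ℝ)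
    (f : Fin n → (Fin n → ℝ) → ℝ) : Prop :=
  ∀ i, ∀ z z' : Fin n → ℝ, semiSq A i (z - z') ≠ 0 →
    ∀ j, j ≠ i → 0 < A j i →
      (f i z - f i z') * ((z - z') ⬝ᵥ (Pi.single j 1 - Pi.single i 1))
        > - semiSq A i (z - z')

/-- `f` is Lipschitz with constant `c` with respect to the seminorms `‖·‖_{M,i}`. -/
def LipschitzDriver {n : ℕ} (A : Matrix (Fin n) (Fin n) ℝ) (c : ℝ)
    (f : Fin n → (Fin n → ℝ) → ℝ) : Prop :=
  ∀ i, ∀ z z' : Fin n → ℝ, |f i z - f i z'| ≤ c * Real.sqrt (semiSq A i (z - z'))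

lemma semiSq_eq {n : ℕ} (A : Matrix (Fin n) (Fin n) ℝ) (hA : IsRateMatrix A) (i : Fin n)
    (z : Fin n → ℝ) : semiSq A i z = ∑ j, A j i * (z j - z i) ^ 2 := by
  have h1 : z ⬝ᵥ (Matrix.diagonal (A.mulVec (Pi.single i 1))).mulVec z
      = ∑ j, A j i * z j ^ 2 := by
    simp only [dotProduct, Matrix.mulVec_diagonal, Matrix.mulVec_single_one, Matrix.col_apply]
    exact Finset.sum_congr rfl fun j _ => by ring
  have hd : (Matrix.diagonal (Pi.single i (1 : ℝ))).mulVec z = Pi.single i (z i) := by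
    ext j
    rw [Matrix.mulVec_diagonal]
    by_cases h : j = i
    · subst h; simp
    · simp [h]
  have h2 : z ⬝ᵥ (A * Matrix.diagonal (Pi.single i 1)).mulVec z = ∑ j, A j i * z j * z i := by
    rw [← Matrix.mulVec_mulVec, hd, Matrix.mulVec_single]
    simp only [dotProduct]
    exact Finset.sum_congr rfl fun j _ => by simp; ring
  have h3 : z ⬝ᵥ (Matrix.diagonal (Pi.single i 1) * A.transpose).mulVec z
      = ∑ j, A j i * z j * z i := by
    rw [← Matrix.mulVec_mulVec]
    simp only [dotProduct, Matrix.mulVec_diagonal]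
    rw [Finset.sum_eq_single i]
    · simp only [Pi.single_eq_same, one_mul, Matrix.mulVec, dotProduct, Matrix.transpose_apply]
      rw [mul_comm, Finset.sum_mul]
    · intro j _ hj
      simp [hj]
    · simp
  have h4 : ∑ j, A j i * z i ^ 2 = 0 := by
    rw [← Finset.sum_mul, hA.2 i, zero_mul]
  unfold semiSq psi
  rw [Matrix.sub_mulVec, Matrix.sub_mulVec, dotProduct_sub, dotProduct_sub, h1, h2, h3,
    ← add_zero (_ - _), ← h4, ← Finset.sum_sub_distrib, ← Finset.sum_sub_distrib,
    ← Finset.sum_add_distrib]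
  exact Finset.sum_congr rfl fun j _ => by ring

/-- Maximum principle: `z ↦ f i z + ∑ j, A j i * z j` does not increase from `z'` to `z` when
`z - z'` attains its maximum at the state `i`. -/
lemma generator_le_of_max {n : ℕ} (A : Matrix (Fin n) (Fin n) ℝ) (hA : IsRateMatrix A) (c : ℝ)
    (f : Fin n → (Fin n → ℝ) → ℝ) (hbal : BalancedDriver A f) (hlip : LipschitzDriver A c f)
    (z z' : Fin n → ℝ) (i : Fin n) (hmax : ∀ j, z j - z' j ≤ z i - z' i) :
    f i z + ∑ j, A j i * z j ≤ f i z' + ∑ j, A j i * z' j := by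
  set x : Fin n → ℝ := fun j => z j - z' j - (z i - z' i) with hx
  have hx0 : ∀ j, x j ≤ 0 := fun j => sub_nonpos.2 (hmax j)
  have hS : semiSq A i (z - z') = ∑ j, A j i * x j ^ 2 := semiSq_eq A hA i _
  have hsum : ∑ j, A j i * x j = ∑ j, A j i * z j - ∑ j, A j i * z' j := by
    have h4 : ∑ j, A j i * (z i - z' i) = 0 := by
      rw [← Finset.sum_mul, hA.2 i, zero_mul]
    rw [← Finset.sum_sub_distrib, ← sub_zero (∑ j, (_ - _)), ← h4, ← Finset.sum_sub_distrib]
    exact Finset.sum_congr rfl fun j _ => by simp only [hx]; ring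
  have hxi : x i = 0 := by simp [hx]
  have hnn : ∀ j, 0 ≤ A j i * x j ^ 2 := by
    intro j
    by_cases h : j = i
    · simp [h, hxi]
    · exact mul_nonneg (hA.1 j i h) (sq_nonneg _)
  suffices h : f i z - f i z' + ∑ j, A j i * x j ≤ 0 by rw [hsum] at h; linarith
  by_cases h0 : semiSq A i (z - z') = 0
  · have hD := hlip i z z'
    rw [h0, Real.sqrt_zero, mul_zero] at hD
    have hD0 := abs_nonpos_iff.1 hD
    rw [hS] at h0
    have hz := (Finset.sum_eq_zero_iff_of_nonneg fun j _ => hnn j).1 h0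
    have : ∑ j, A j i * x j = 0 := Finset.sum_eq_zero fun j hj => by
      have := hz j hj
      rcases mul_eq_zero.1 this with h | h
      · simp [h]
      · simp [pow_eq_zero_iff two_ne_zero |>.1 h]
    rw [hD0, this, add_zero]
  · set S := semiSq A i (z - z') with hSdef
    have hSpos : 0 < S := lt_of_le_of_ne (hS ▸ Finset.sum_nonneg fun j _ => hnn j) (Ne.symm h0)
    have hterm : ∀ j, (f i z - f i z') * (A j i * x j ^ 2) ≤ -S * (A j i * x j) := by
      intro j
      by_cases hji : j = i
      · simp [hji, hxi]
      rcases (hA.1 j i hji).eq_or_lt with ha | ha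
      · simp [← ha]
      have hb := hbal i z z' h0 j hji ha
      have hdot : (z - z') ⬝ᵥ (Pi.single j 1 - Pi.single i 1) = x j := by
        rw [dotProduct_sub, dotProduct_single_one, dotProduct_single_one]
        rfl
      rw [hdot] at hb
      have := mul_le_mul_of_nonneg_left hb.le
        (mul_nonneg ha.le (neg_nonneg.2 (hx0 j)))
      linarith
    have hall := Finset.sum_le_sum fun j (_ : j ∈ Finset.univ) => hterm j
    rw [← Finset.mul_sum, ← Finset.mul_sum, ← hS] at hall
    have : S * (f i z - f i z' + ∑ j, A j i * x j) ≤ 0 := by linarith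
    exact nonpos_of_mul_nonpos_right this hSpos

/-- Backward Gronwall estimate for the maximum over finitely many coordinates: the differential
inequality is only required of a coordinate at the times when it realises the maximum. -/
lemma backward_bound {n : ℕ} (α T K : ℝ) (g g' : ℝ → Fin n → ℝ)
    (hg : ∀ t ∈ Set.Icc (0 : ℝ) T, ∀ i, HasDerivWithinAt (fun s => g s i) (g' t i)
      (Set.Icc (0 : ℝ) T) t)
    (hmax : ∀ t ∈ Set.Icc (0 : ℝ) T, ∀ i, (∀ j, g t j ≤ g t i) → α * g t i ≤ g' t i)
    (hK : ∀ i, g T i ≤ K) :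
    ∀ t ∈ Set.Icc (0 : ℝ) T, ∀ i, g t i ≤ K * Real.exp (-α * (T - t)) := by
  intro t ht i
  -- The tilt `ε * t` makes the derivative strictly positive at a maximum, so that the maximum
  -- over `[0, T]` and all coordinates can only sit at the terminal time.
  have key : ∀ ε > 0, Real.exp (-α * t) * g t i + ε * t ≤ Real.exp (-α * T) * K + ε * T := by
    intro ε hε
    set u : Fin n → ℝ → ℝ := fun j s => Real.exp (-α * s) * g s j + ε * s with hu
    have hder : ∀ s ∈ Set.Icc (0 : ℝ) T, ∀ j, HasDerivWithinAt (u j)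
        (Real.exp (-α * s) * (g' s j - α * g s j) + ε) (Set.Icc (0 : ℝ) T) s := by
      intro s hs j
      have h1 : HasDerivAt (fun s : ℝ => Real.exp (-α * s)) (Real.exp (-α * s) * (-α * 1)) s :=
        ((hasDerivAt_id s).const_mul (-α)).exp
      have h2 : HasDerivAt (fun s : ℝ => ε * s) (ε * 1) s := (hasDerivAt_id s).const_mul ε
      exact ((h1.hasDerivWithinAt.mul (hg s hs j)).add h2.hasDerivWithinAt).congr_deriv
        (by ring)
    have hex : ∀ j, ∃ s ∈ Set.Icc (0 : ℝ) T, IsMaxOn (u j) (Set.Icc 0 T) s := fun j =>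
      isCompact_Icc.exists_isMaxOn ⟨t, ht⟩ fun s hs => (hder s hs j).continuousWithinAt
    choose τ hτ hτmax using hex
    obtain ⟨j, -, hj⟩ := Finset.exists_max_image Finset.univ (fun j => u j (τ j))
      ⟨i, Finset.mem_univ i⟩
    have hglob : ∀ s ∈ Set.Icc (0 : ℝ) T, ∀ k, u k s ≤ u j (τ j) := fun s hs k =>
      (hτmax k hs).trans (hj k (Finset.mem_univ k))
    have hτT : τ j = T := by
      by_contra hne
      have hlt : τ j < T := lt_of_le_of_ne (hτ j).2 hne
      have hjm : ∀ k, g (τ j) k ≤ g (τ j) j := by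
        intro k
        have := hglob _ (hτ j) k
        simp only [hu] at this
        exact le_of_mul_le_mul_left (by linarith) (Real.exp_pos (-α * τ j))
      have hpos := hmax _ (hτ j) j hjm
      have hcone : T - τ j ∈ posTangentConeAt (Set.Icc (0 : ℝ) T) (τ j) := by
        apply sub_mem_posTangentConeAt_of_segment_subset
        rw [segment_eq_Icc hlt.le]
        exact Set.Icc_subset_Icc_left (hτ j).1
      have hle := (hτmax j).localize.hasFDerivWithinAt_nonpos
        (hder _ (hτ j) j).hasFDerivWithinAt hcone
      simp only [ContinuousLinearMap.toSpanSingleton_apply, smul_eq_mul] at hle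
      have h3 : 0 ≤ Real.exp (-α * τ j) * (g' (τ j) j - α * g (τ j) j) :=
        mul_nonneg (Real.exp_pos _).le (sub_nonneg.2 hpos)
      have : 0 < (T - τ j) * (Real.exp (-α * τ j) * (g' (τ j) j - α * g (τ j) j) + ε) :=
        mul_pos (sub_pos.2 hlt) (by linarith)
      linarith
    have h5 := hglob t ht i
    rw [hτT] at h5
    have h6 := mul_le_mul_of_nonneg_left (hK j) (Real.exp_pos (-α * T)).le
    simp only [hu] at h5
    linarith
  have hlim : Real.exp (-α * t) * g t i ≤ Real.exp (-α * T) * K := by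
    refine le_of_forall_pos_le_add fun δ hδ => ?_
    have hT1 : 0 < T - t + 1 := by linarith [ht.2]
    have h1 := key (δ / (T - t + 1)) (div_pos hδ hT1)
    have h2 : δ / (T - t + 1) * (T - t + 1) = δ := div_mul_cancel₀ _ hT1.ne'
    have h3 : 0 < δ / (T - t + 1) := div_pos hδ hT1
    linarith
  have he : Real.exp (-α * (T - t)) = Real.exp (-α * T) * Real.exp (α * t) := by
    rw [← Real.exp_add]; ring_nf
  have h1 : Real.exp (α * t) * Real.exp (-α * t) = 1 := by
    rw [← Real.exp_add]; simp
  calc g t i = Real.exp (α * t) * (Real.exp (-α * t) * g t i) := by rw [← mul_assoc, h1, one_mul]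
    _ ≤ Real.exp (α * t) * (Real.exp (-α * T) * K) :=
        mul_le_mul_of_nonneg_left hlim (Real.exp_pos _).le
    _ = K * Real.exp (-α * (T - t)) := by rw [he]; ring

/-- The uniform bound `C / α`, for an arbitrary horizon. -/
lemma uniform_bound {n : ℕ} (A : Matrix (Fin n) (Fin n) ℝ) (hA : IsRateMatrix A)
    (α C c : ℝ) (hα : 0 < α) (hC : 0 ≤ C)
    (f : Fin n → (Fin n → ℝ) → ℝ)
    (hbal : BalancedDriver A f) (hlip : LipschitzDriver A c f)
    (hf0 : ∀ i, |f i 0| ≤ C)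
    (T : ℝ) (w : ℝ → Fin n → ℝ) (hwT : w T = 0)
    (hw : ∀ t ∈ Set.Icc (0 : ℝ) T, ∀ i, HasDerivWithinAt (fun s => w s i)
        (α * w t i - f i (w t) - ∑ j, A j i * w t j) (Set.Icc (0 : ℝ) T) t) :
    ∀ t ∈ Set.Icc (0 : ℝ) T, ∀ i, |w t i| ≤ C / α := by
  intro t ht i
  have hCα : 0 ≤ C / α := div_nonneg hC hα.le
  have hαC : α * (C / α) = C := mul_div_cancel₀ _ hα.ne'
  have hup := backward_bound α T 0 (fun t i => w t i - C / α)
    (fun t i => α * w t i - f i (w t) - ∑ j, A j i * w t j)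
    (fun t ht i => (hw t ht i).sub_const _)
    (fun t ht i hm => by
      have := generator_le_of_max A hA c f hbal hlip (w t) 0 i
        (fun j => by simpa using hm j)
      simp only [Pi.zero_apply, mul_zero, Finset.sum_const_zero] at this
      have := (abs_le.1 (hf0 i)).2
      rw [mul_sub, hαC]
      linarith)
    (fun i => by simpa [hwT] using hCα) t ht i
  have hlo := backward_bound α T 0 (fun t i => -w t i - C / α)
    (fun t i => -(α * w t i - f i (w t) - ∑ j, A j i * w t j))
    (fun t ht i => ((hw t ht i).fun_neg).sub_const _)
    (fun t ht i hm => by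
      have := generator_le_of_max A hA c f hbal hlip 0 (w t) i
        (fun j => by simpa using hm j)
      simp only [Pi.zero_apply, mul_zero, Finset.sum_const_zero] at this
      have := (abs_le.1 (hf0 i)).1
      rw [mul_sub, hαC]
      linarith)
    (fun i => by simpa [hwT] using hCα) t ht i
  rw [zero_mul] at hup hlo
  exact abs_le.2 ⟨by linarith, by linarith⟩

/-- One-sided comparison: a terminal bound on the difference of two solutions decays backwards
in time at rate `α`. -/
lemma comparison {n : ℕ} (A : Matrix (Fin n) (Fin n) ℝ) (hA : IsRateMatrix A) (α c : ℝ)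
    (f : Fin n → (Fin n → ℝ) → ℝ)
    (hbal : BalancedDriver A f) (hlip : LipschitzDriver A c f)
    (T K : ℝ) (v w : ℝ → Fin n → ℝ)
    (hv : ∀ t ∈ Set.Icc (0 : ℝ) T, ∀ i, HasDerivWithinAt (fun s => v s i)
        (α * v t i - f i (v t) - ∑ j, A j i * v t j) (Set.Icc (0 : ℝ) T) t)
    (hw : ∀ t ∈ Set.Icc (0 : ℝ) T, ∀ i, HasDerivWithinAt (fun s => w s i)
        (α * w t i - f i (w t) - ∑ j, A j i * w t j) (Set.Icc (0 : ℝ) T) t)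
    (hK : ∀ i, v T i - w T i ≤ K) :
    ∀ t ∈ Set.Icc (0 : ℝ) T, ∀ i, v t i - w t i ≤ K * Real.exp (-α * (T - t)) :=
  backward_bound α T K (fun t i => v t i - w t i) _
    (fun t ht i => (hv t ht i).fun_sub (hw t ht i))
    (fun t _ i hm => by
      have := generator_le_of_max A hA c f hbal hlip (v t) (w t) i hm
      linarith)
    hK

/-- Uniform bound and Cauchy estimate for the Markovian finite-horizon discounted BSDEs. -/
theorem stmt4 {n : ℕ} (A : Matrix (Fin n) (Fin n) ℝ) (hA : IsRateMatrix A)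
    (α C c : ℝ) (hα : 0 < α) (hC : 0 ≤ C)
    (f : Fin n → (Fin n → ℝ) → ℝ)
    (hbal : BalancedDriver A f) (hlip : LipschitzDriver A c f)
    (hf0 : ∀ i, |f i 0| ≤ C)
    (T : ℝ) (hT : 0 ≤ T) (w : ℝ → Fin n → ℝ) (hwT : w T = 0)
    (hw : ∀ t ∈ Set.Icc (0 : ℝ) T, ∀ i, HasDerivWithinAt (fun s => w s i)
        (α * w t i - f i (w t) - ∑ j, A j i * w t j) (Set.Icc (0 : ℝ) T) t) :
    (∀ t ∈ Set.Icc (0 : ℝ) T, ∀ i, |w t i| ≤ C / α) ∧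
    (∀ T', T ≤ T' → ∀ w' : ℝ → Fin n → ℝ, w' T' = 0 →
      (∀ t ∈ Set.Icc (0 : ℝ) T', ∀ i, HasDerivWithinAt (fun s => w' s i)
          (α * w' t i - f i (w' t) - ∑ j, A j i * w' t j) (Set.Icc (0 : ℝ) T') t) →
      ∀ t ∈ Set.Icc (0 : ℝ) T, ∀ i,
        |w t i - w' t i| ≤ (C / α) * Real.exp (-α * (T - t))) := by
  refine ⟨uniform_bound A hA α C c hα hC f hbal hlip hf0 T w hwT hw, ?_⟩
  intro T' hTT' w' hw'T' hw' t ht i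
  have hbd := uniform_bound A hA α C c hα hC f hbal hlip hf0 T' w' hw'T' hw' T ⟨hT, hTT'⟩
  have hw'' : ∀ t ∈ Set.Icc (0 : ℝ) T, ∀ i, HasDerivWithinAt (fun s => w' s i)
      (α * w' t i - f i (w' t) - ∑ j, A j i * w' t j) (Set.Icc (0 : ℝ) T) t := fun t ht i =>
    (hw' t ⟨ht.1, ht.2.trans hTT'⟩ i).mono (Set.Icc_subset_Icc_right hTT')
  have h1 := comparison A hA α c f hbal hlip T (C / α) w w' hw hw''
    (fun i => by rw [hwT, Pi.zero_apply]; linarith [(abs_le.1 (hbd i)).1]) t ht i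
  have h2 := comparison A hA α c f hbal hlip T (C / α) w' w hw'' hw
    (fun i => by rw [hwT, Pi.zero_apply]; linarith [(abs_le.1 (hbd i)).2]) t ht i
  exact abs_le.2 ⟨by linarith, h1⟩
end

section
/- Let A be an n×n rate matrix, α > 0, C ≥ 0, and let f : {1,…,n} × ℝⁿ → ℝ be a driver that is balanced, Lipschitz with some constant c with respect to the seminorms ‖·‖_{M,i}, and satisfies |f(i,0)| ≤ C for all i. Then there exists exactly one vector v ∈ ℝⁿ such that α·v i = f(i, v) + ∑_j A j i · v j for every i, and this v satisfies |v i| ≤ C/α for all i. (This is the Markovian, time-invariant form of the unique bounded solution of the infinite-horizon discounted BSDE.) -/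
/-!
Write `w = z - z'`, `d j = w j - w i`, `Δ = f i z - f i z'` and `S = ‖w‖²_{M,i} = ∑ j, A j i * d j ^ 2`.
If `S ≠ 0`, then trivially `Δ = ∑ j, A j i * (Δ * d j / S) * d j`, so the drift
`G i v = f i v + ∑ j, A j i * v j` satisfies
`G i z - G i z' = ∑ j, B j * (w j - w i)` with `B j = A j i * (1 + Δ * d j / S)`.
Balancedness says exactly that these weights are nonnegative, and the Lipschitz condition bounds
them uniformly; if `S = 0`, both sides vanish (`exists_weights`).

Hence increments of `G` look like those of a Markov generator with bounded jump rates, and for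
small `h > 0` the explicit Euler map `v ↦ v + h • (G v - α • v)` contracts the sup norm with factor
`1 - h * α` (`norm_euler_sub_le`). Its fixed points are the solutions of `α • v = G v`, so Banach's
theorem gives existence and uniqueness. As the Euler map sends `0` to a vector of norm at most
`h * C`, a solution satisfies `‖v‖ ≤ (1 - h * α) * ‖v‖ + h * C`, i.e. `‖v‖ ≤ C / α`.
-/

open Matrix BigOperators

/-- Increments of the drift are those of a generator with jump rates in `[0, M + |c| * √M]`. -/
lemma exists_weights {n : ℕ} {A : Matrix (Fin n) (Fin n) ℝ} (hA : IsRateMatrix A) {c M : ℝ}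
    (hM0 : 0 ≤ M) (hM : ∀ i j, A i j ≤ M) {f : Fin n → (Fin n → ℝ) → ℝ}
    (hbal : BalancedDriver A f) (hlip : LipschitzDriver A c f) (i : Fin n) (z z' : Fin n → ℝ) :
    ∃ B : Fin n → ℝ, (∀ j, 0 ≤ B j ∧ B j ≤ M + |c| * √M) ∧
      (f i z + ∑ j, A j i * z j) - (f i z' + ∑ j, A j i * z' j)
        = ∑ j, B j * ((z - z') j - (z - z') i) := by
  set w := z - z' with hw
  set S := semiSq A i w with hS
  set Δ := f i z - f i z' with hΔ
  have hSe : S = ∑ j, A j i * (w j - w i) ^ 2 := semiSq_eq A hA i w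
  have hterm : ∀ j, 0 ≤ A j i * (w j - w i) ^ 2 := by
    intro j
    by_cases h : j = i
    · subst h; simp
    · exact mul_nonneg (hA.1 j i h) (sq_nonneg _)
  have hS0 : 0 ≤ S := hSe ▸ Finset.sum_nonneg fun j _ => hterm j
  have hLip : |Δ| ≤ |c| * √S :=
    (hlip i z z').trans (mul_le_mul_of_nonneg_right (le_abs_self c) (Real.sqrt_nonneg _))
  have hdrift : (f i z + ∑ j, A j i * z j) - (f i z' + ∑ j, A j i * z' j)
      = Δ + ∑ j, A j i * (w j - w i) := by
    have : ∑ j, A j i * (w j - w i) = ∑ j, A j i * z j - ∑ j, A j i * z' j - w i * ∑ j, A j i := by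
      rw [Finset.mul_sum, ← Finset.sum_sub_distrib, ← Finset.sum_sub_distrib]
      refine Finset.sum_congr rfl fun j _ => ?_
      simp only [hw, Pi.sub_apply]
      ring
    rw [this, hA.2 i, hΔ]
    ring
  have hK : 0 ≤ M + |c| * √M := by positivity
  rw [hdrift]
  rcases hS0.eq_or_lt with h0 | hpos
  · refine ⟨0, fun j => ⟨le_rfl, hK⟩, ?_⟩
    have hΔ0 : Δ = 0 := by simpa [← h0] using hLip
    have hz : ∀ j, A j i * (w j - w i) = 0 := by
      intro j
      have h := (Finset.sum_eq_zero_iff_of_nonneg fun j _ => hterm j).1 (hSe ▸ h0.symm) j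
        (Finset.mem_univ j)
      rcases mul_eq_zero.1 h with h | h
      · simp [h]
      · simp [pow_eq_zero_iff two_ne_zero |>.1 h]
    simp [hΔ0, hz]
  · -- The weight at `j = i` multiplies zero; it is set to `0` since `A i i` may be negative.
    refine ⟨fun j => if j = i then 0 else A j i * (1 + Δ * (w j - w i) / S), fun j => ?_, ?_⟩
    · by_cases hj : j = i
      · simpa [hj] using hK
      simp only [hj, if_false]
      have hAj := hA.1 j i hj
      constructor
      · rcases hAj.eq_or_lt with h | h
        · simp [← h]
        refine mul_nonneg hAj ?_
        have hb := hbal i z z' hpos.ne' j hj h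
        rw [dotProduct_sub, dotProduct_single_one, dotProduct_single_one] at hb
        have : -1 ≤ Δ * (w j - w i) / S := by
          rw [le_div_iff₀ hpos]
          linarith
        linarith
      · have h1 : |A j i * (w j - w i)| ≤ √M * √S := by
          rw [← Real.sqrt_mul hM0]
          apply Real.abs_le_sqrt
          have h2 : A j i * (w j - w i) ^ 2 ≤ S :=
            hSe ▸ Finset.single_le_sum (fun k _ => hterm k) (Finset.mem_univ j)
          calc (A j i * (w j - w i)) ^ 2 = A j i * (A j i * (w j - w i) ^ 2) := by ring
            _ ≤ M * S := mul_le_mul (hM j i) h2 (hterm j) hM0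
        have h3 : Δ * (A j i * (w j - w i)) ≤ |c| * √M * S :=
          calc Δ * (A j i * (w j - w i)) ≤ |Δ * (A j i * (w j - w i))| := le_abs_self _
            _ = |Δ| * |A j i * (w j - w i)| := abs_mul _ _
            _ ≤ (|c| * √S) * (√M * √S) :=
                mul_le_mul hLip h1 (abs_nonneg _) (by positivity)
            _ = |c| * √M * (√S * √S) := by ring
            _ = |c| * √M * S := by rw [Real.mul_self_sqrt hS0]
        have h4 : Δ * (A j i * (w j - w i)) / S ≤ |c| * √M := (div_le_iff₀ hpos).2 h3
        calc A j i * (1 + Δ * (w j - w i) / S)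
            = A j i + Δ * (A j i * (w j - w i)) / S := by ring
          _ ≤ M + |c| * √M := add_le_add (hM j i) h4
    · have h1 : ∀ j, (if j = i then 0 else A j i * (1 + Δ * (w j - w i) / S)) * (w j - w i)
          = A j i * (w j - w i) + Δ / S * (A j i * (w j - w i) ^ 2) := by
        intro j
        by_cases hj : j = i
        · simp [hj]
        · simp only [hj, if_false]
          ring
      simp only [h1]
      rw [Finset.sum_add_distrib, ← Finset.mul_sum, ← hSe, div_mul_cancel₀ _ hpos.ne']
      ring

/-- One explicit Euler step of size `h` for `v' = G v - α v`, where
`G i v = f i v + ∑ j, A j i * v j`. -/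
def eulerStep {n : ℕ} (A : Matrix (Fin n) (Fin n) ℝ) (f : Fin n → (Fin n → ℝ) → ℝ) (α h : ℝ)
    (v : Fin n → ℝ) : Fin n → ℝ :=
  fun i => v i + h * ((f i v + ∑ j, A j i * v j) - α * v i)

/-- The step-size restriction makes each component of an increment of the Euler map a
combination, with nonnegative coefficients summing to `1 - h * α`, of the components of `v - u`. -/
lemma norm_euler_sub_le {n : ℕ} {A : Matrix (Fin n) (Fin n) ℝ} (hA : IsRateMatrix A)
    {α c M h : ℝ} (hM0 : 0 ≤ M) (hM : ∀ i j, A i j ≤ M)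
    {f : Fin n → (Fin n → ℝ) → ℝ} (hbal : BalancedDriver A f) (hlip : LipschitzDriver A c f)
    (hh : 0 < h) (hstep : h * (α + n * (M + |c| * √M)) ≤ 1) (v u : Fin n → ℝ) :
    ‖eulerStep A f α h v - eulerStep A f α h u‖ ≤ (1 - h * α) * ‖v - u‖ := by
  have hK : 0 ≤ M + |c| * √M := by positivity
  have hα1 : 0 ≤ 1 - h * α := by
    have : 0 ≤ h * (n * (M + |c| * √M)) := by positivity
    linarith
  rw [pi_norm_le_iff_of_nonneg (mul_nonneg hα1 (norm_nonneg _))]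
  intro i
  obtain ⟨B, hB, hG⟩ := exists_weights hA hM0 hM hbal hlip i v u
  set w := v - u with hw
  have hwi : ∀ j, |w j| ≤ ‖w‖ := fun j => norm_le_pi_norm w j
  have hsum : ∑ j, B j ≤ n * (M + |c| * √M) := by
    simpa [mul_add] using Finset.sum_le_sum fun j (_ : j ∈ Finset.univ) => (hB j).2
  have ha : 0 ≤ 1 - h * α - h * ∑ j, B j := by
    have := mul_le_mul_of_nonneg_left hsum hh.le
    linarith
  have heq : (eulerStep A f α h v - eulerStep A f α h u) i
      = (1 - h * α - h * ∑ j, B j) * w i + h * ∑ j, B j * w j := by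
    have h1 : ∑ j, B j * (w j - w i) = ∑ j, B j * w j - (∑ j, B j) * w i := by
      rw [Finset.sum_mul, ← Finset.sum_sub_distrib]
      exact Finset.sum_congr rfl fun j _ => by ring
    rw [h1] at hG
    have h2 : w i = v i - u i := rfl
    simp only [Pi.sub_apply, eulerStep]
    rw [h2] at hG ⊢
    linear_combination h * hG
  have hBw : |∑ j, B j * w j| ≤ (∑ j, B j) * ‖w‖ := by
    rw [Finset.sum_mul]
    refine (Finset.abs_sum_le_sum_abs _ _).trans (Finset.sum_le_sum fun j _ => ?_)
    rw [abs_mul, abs_of_nonneg (hB j).1]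
    exact mul_le_mul_of_nonneg_left (hwi j) (hB j).1
  rw [heq, Real.norm_eq_abs]
  calc |(1 - h * α - h * ∑ j, B j) * w i + h * ∑ j, B j * w j|
      ≤ |(1 - h * α - h * ∑ j, B j) * w i| + |h * ∑ j, B j * w j| := abs_add_le _ _
    _ = (1 - h * α - h * ∑ j, B j) * |w i| + h * |∑ j, B j * w j| := by
        rw [abs_mul, abs_mul, abs_of_nonneg ha, abs_of_pos hh]
    _ ≤ (1 - h * α - h * ∑ j, B j) * ‖w‖ + h * ((∑ j, B j) * ‖w‖) :=
        add_le_add (mul_le_mul_of_nonneg_left (hwi i) ha) (mul_le_mul_of_nonneg_left hBw hh.le)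
    _ = (1 - h * α) * ‖w‖ := by ring

/-- Existence and uniqueness of the Markovian, time-invariant solution of the
infinite-horizon discounted BSDE, with the bound `|v i| ≤ C/α`. -/
theorem stmt5 {n : ℕ} (A : Matrix (Fin n) (Fin n) ℝ) (hA : IsRateMatrix A)
    (α C c : ℝ) (hα : 0 < α) (hC : 0 ≤ C)
    (f : Fin n → (Fin n → ℝ) → ℝ)
    (hbal : BalancedDriver A f) (hlip : LipschitzDriver A c f)
    (hf0 : ∀ i, |f i 0| ≤ C) :
    (∃! v : Fin n → ℝ, ∀ i, α * v i = f i v + ∑ j, A j i * v j) ∧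
    (∀ v : Fin n → ℝ, (∀ i, α * v i = f i v + ∑ j, A j i * v j) →
      ∀ i, |v i| ≤ C / α) := by
  obtain ⟨M, hM0, hM⟩ : ∃ M : ℝ, 0 ≤ M ∧ ∀ i j, A i j ≤ M := by
    refine ⟨∑ i, ∑ j, |A i j|, by positivity, fun i j => ?_⟩
    calc A i j ≤ |A i j| := le_abs_self _
      _ ≤ ∑ j, |A i j| :=
          Finset.single_le_sum (f := fun j => |A i j|) (fun _ _ => abs_nonneg _) (Finset.mem_univ j)
      _ ≤ ∑ i, ∑ j, |A i j| :=
          Finset.single_le_sum (f := fun i => ∑ j, |A i j|) (fun _ _ => by positivity)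
            (Finset.mem_univ i)
  -- `n * (M + |c| * √M)` bounds the total jump rate out of any state.
  obtain ⟨h, hh, hstep⟩ : ∃ h : ℝ, 0 < h ∧ h * (α + n * (M + |c| * √M)) ≤ 1 := by
    have : 0 < α + n * (M + |c| * √M) := by positivity
    exact ⟨(α + n * (M + |c| * √M))⁻¹, by positivity, (inv_mul_cancel₀ this.ne').le⟩
  have hT := norm_euler_sub_le hA hM0 hM hbal hlip hh hstep
  have hα1 : 0 ≤ 1 - h * α := by
    have : 0 ≤ h * (n * (M + |c| * √M)) := by positivity
    linarith
  have hfix : ∀ v : Fin n → ℝ,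
      (∀ i, α * v i = f i v + ∑ j, A j i * v j) ↔ eulerStep A f α h v = v := by
    intro v
    rw [funext_iff]
    refine forall_congr' fun i => ?_
    simp only [eulerStep, add_eq_left, mul_eq_zero, hh.ne', false_or, sub_eq_zero]
    exact eq_comm
  have hcontr : ContractingWith (1 - h * α).toNNReal (eulerStep A f α h) := by
    refine ⟨?_, LipschitzWith.of_dist_le_mul fun v u => ?_⟩
    · rw [Real.toNNReal_lt_one]
      linarith [mul_pos hh hα]
    · rw [Real.coe_toNNReal _ hα1, dist_eq_norm, dist_eq_norm]
      exact hT v u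
  constructor
  · refine ⟨hcontr.fixedPoint, (hfix _).2 hcontr.fixedPoint_isFixedPt, fun v hv => ?_⟩
    exact hcontr.fixedPoint_unique ((hfix v).1 hv)
  · intro v hv i
    have hT0 : ‖eulerStep A f α h 0‖ ≤ h * C := by
      rw [pi_norm_le_iff_of_nonneg (by positivity)]
      intro j
      simpa [eulerStep, abs_mul, abs_of_pos hh] using mul_le_mul_of_nonneg_left (hf0 j) hh.le
    have h1 := hT v 0
    rw [(hfix v).1 hv, sub_zero] at h1
    have h2 : h * (‖v‖ * α) ≤ h * C := by
      linarith [norm_le_norm_add_norm_sub' v (eulerStep A f α h 0)]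
    calc |v i| ≤ ‖v‖ := norm_le_pi_norm v i
      _ ≤ C / α := (le_div_iff₀ hα).2 (le_of_mul_le_mul_left h2 hh)
end
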